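/- Let m ≥ 3, let B > 0, and let λ₁, …, λ_m be real numbers with λ_i ≤ B for all i and with sum S = λ₁ + ⋯ + λ_m. Suppose λ_i·(S − λ_i) < 0 for every i, and that at least two of the λ_i are negative. Then ∑_{i=1}^{m} |λ_i| < 3(m − 2)·B. -/

import Mathlib

open Finset

/-!
Let `P` and `N` be the sums of the positive and negative parts of the numbers, so that `S = P - N`
and `∑ |λᵢ| = P + N`. Adding up `λᵢ < S` over `k` indices gives `-N < k (P - N)`, that is
`(k - 1) N < k P`, and hence `(k - 1) (P + N) < (2k - 1) P`. If the `k` chosen terms are negative,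
only the other `m - k` contribute to `P`, so `P ≤ (m - k) B`. The theorem is the case `k = 2`.
-/

section

variable {ι R : Type*} [CommRing R] [LinearOrder R] [IsStrictOrderedRing R]
  {s t : Finset ι} {f : ι → R}

theorem card_sub_one_mul_sum_negPart_lt (hts : t ⊆ s) (ht : t.Nonempty)
    (h : ∀ i ∈ t, f i < ∑ j ∈ s, f j) :
    ((#t : R) - 1) * ∑ i ∈ s, (f i)⁻ < #t * ∑ i ∈ s, (f i)⁺ := by
  have hsum : -∑ i ∈ s, (f i)⁻ < #t * (∑ i ∈ s, (f i)⁺ - ∑ i ∈ s, (f i)⁻) :=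
    calc
      -∑ i ∈ s, (f i)⁻ ≤ -∑ i ∈ t, (f i)⁻ :=
        neg_le_neg (sum_le_sum_of_subset_of_nonneg hts fun i _ _ => negPart_nonneg (f i))
      _ = ∑ i ∈ t, -(f i)⁻ := (sum_neg_distrib _).symm
      _ ≤ ∑ i ∈ t, f i := sum_le_sum fun i _ => neg_le.1 (neg_le_negPart (f i))
      _ < ∑ _i ∈ t, ∑ j ∈ s, f j := sum_lt_sum_of_nonempty ht h
      _ = #t * ∑ j ∈ s, f j := by rw [sum_const, nsmul_eq_mul]
      _ = #t * (∑ i ∈ s, (f i)⁺ - ∑ i ∈ s, (f i)⁻) := by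
        simp only [← sum_sub_distrib, posPart_sub_negPart]
  linarith

theorem sum_posPart_le_card_sub_card_mul {B : R} (hts : t ⊆ s) (hB : 0 ≤ B)
    (hnonpos : ∀ i ∈ t, f i ≤ 0) (hle : ∀ i ∈ s, f i ≤ B) :
    ∑ i ∈ s, (f i)⁺ ≤ ((#s : R) - #t) * B := by
  classical
  calc
    ∑ i ∈ s, (f i)⁺ = ∑ i ∈ s \ t, (f i)⁺ := by
      rw [← sum_sdiff hts, sum_eq_zero fun i hi => posPart_eq_zero.2 (hnonpos i hi), add_zero]
    _ ≤ #(s \ t) • B :=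
      sum_le_card_nsmul _ _ _ fun i hi => sup_le (hle i (sdiff_subset hi)) hB
    _ = ((#s : R) - #t) * B := by
      rw [nsmul_eq_mul, card_sdiff_of_subset hts, Nat.cast_sub (card_le_card hts)]

theorem sum_abs_lt_of_both_signs_general {k : ℕ} {B : R} (hk : 0 < k) (hB : 0 ≤ B)
    (hle : ∀ i ∈ s, f i ≤ B) (h : ∀ i ∈ s, f i < 0 → f i < ∑ j ∈ s, f j)
    (hneg : k ≤ #{i ∈ s | f i < 0}) :
    ((k : R) - 1) * ∑ i ∈ s, |f i| < (2 * k - 1) * ((#s : R) - k) * B := by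
  obtain ⟨t, htneg, rfl⟩ := exists_subset_card_eq hneg
  have hts : t ⊆ s := htneg.trans (filter_subset _ s)
  have hft : ∀ i ∈ t, f i < 0 := fun i hi => (mem_filter.1 (htneg hi)).2
  have hN := card_sub_one_mul_sum_negPart_lt hts (card_pos.1 hk)
    fun i hi => h i (hts hi) (hft i hi)
  have hP := sum_posPart_le_card_sub_card_mul hts hB (fun i hi => (hft i hi).le) hle
  have hk_one : (1 : R) ≤ #t := Nat.one_le_cast.2 hk
  calc
    ((#t : R) - 1) * ∑ i ∈ s, |f i|
        = (#t - 1) * ∑ i ∈ s, (f i)⁺ + (#t - 1) * ∑ i ∈ s, (f i)⁻ := by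
      simp only [← mul_add, ← sum_add_distrib, posPart_add_negPart]
    _ < (#t - 1) * ∑ i ∈ s, (f i)⁺ + #t * ∑ i ∈ s, (f i)⁺ := by gcongr
    _ = (2 * #t - 1) * ∑ i ∈ s, (f i)⁺ := by ring
    _ ≤ (2 * #t - 1) * (((#s : R) - #t) * B) := mul_le_mul_of_nonneg_left hP (by linarith)
    _ = (2 * #t - 1) * ((#s : R) - #t) * B := (mul_assoc _ _ _).symm

end

/-- Let `m ≥ 3`, `B > 0`, and `λ₁, …, λ_m` reals with `λᵢ ≤ B` for all `i` and sum `S`.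
If `λᵢ·(S − λᵢ) < 0` for every `i` and at least two of the `λᵢ` are negative, then
`∑ |λᵢ| < 3(m − 2)·B`. -/
theorem sum_abs_lt_of_both_signs (m : ℕ) (hm : 3 ≤ m) (B : ℝ) (hB : 0 < B)
    (lam : Fin m → ℝ) (hle : ∀ i, lam i ≤ B)
    (h : ∀ i, lam i * ((∑ j, lam j) - lam i) < 0)
    (hneg : 2 ≤ (Finset.univ.filter (fun i => lam i < 0)).card) :
    ∑ i, |lam i| < 3 * ((m : ℝ) - 2) * B := by
  have hgen := sum_abs_lt_of_both_signs_general two_pos hB.le (fun i _ => hle i)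
    (fun i _ hi => sub_pos.1 (pos_of_mul_neg_right (h i) hi.le)) hneg
  rw [card_fin, Nat.cast_ofNat] at hgen
  linarith
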